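/- Two-variable von Neumann inequality: Let T₁ and T₂ be commuting contractions on a complex Hilbert space H. Then for every finitely supported family of coefficients c : ℕ×ℕ → ℂ, ‖ Σ_{(i,j)} c(i,j) · T₁^i T₂^j ‖ ≤ sup { | Σ_{(i,j)} c(i,j) · z^i w^j | : z, w ∈ ℂ, |z| ≤ 1, |w| ≤ 1 }. -/

import Mathlib

open ContinuousLinearMap

/-!
Writing `D₁`, `D₂` for defect operators of the contractions `T₁`, `T₂`, Schäffer's isometric
dilations `Wᵢ (h, f) = (Tᵢ h, (Dᵢ h, f))` of `T₁` and `T₂` need not commute: the two entries that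
`W₁ W₂` and `W₂ W₁` put in front of `f` are `(D₁ T₂ h, D₂ h)` and `(D₂ T₁ h, D₁ h)`. These pairs
have the same norm, and if the ranges of `D₁` and `D₂` are orthogonal then a Householder reflection
exchanges them. Let `Γ` apply this reflection to each pair of the sequence. Then `Γ W₁` and `W₂ Γ`
are commuting isometric dilations, which is Andô's theorem. Compressing to `H` reduces the
inequality to commuting isometries.

For an isometry `V` commuting with the `Aᵢ`, the vectors `Vᵏ (∑ Aᵢ V ^ eᵢ) x` all have the same
norm. On `ℤ/L`, up to an error that stays bounded as `L` grows, they arise from the vectors `Vᵏ x`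
by a convolution whose Fourier multiplier is `∑ z ^ eᵢ Aᵢ` at `L`-th roots of unity `z`. Parseval's
identity bounds the mean square norm, and `L → ∞` gives `‖∑ Aᵢ V ^ eᵢ‖ ≤ sup ‖∑ z ^ eᵢ Aᵢ‖` over
`|z| = 1`. Allowing operator coefficients `Aᵢ` lets one treat the two variables one after the other.
-/

open scoped InnerProductSpace

section Fourier

variable {G E E' ι : Type*} [AddCommGroup G] [Fintype G]
  [NormedAddCommGroup E] [InnerProductSpace ℂ E] [NormedAddCommGroup E'] [InnerProductSpace ℂ E']

theorem sum_norm_sq_sum_addChar_neg_smul (f : G → E) :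
    ∑ ψ : AddChar G ℂ, ‖∑ k, ψ (-k) • f k‖ ^ 2 = Fintype.card G * ∑ k, ‖f k‖ ^ 2 := by
  classical
  have expand (ψ : AddChar G ℂ) :
      ((‖∑ k, ψ (-k) • f k‖ ^ 2 : ℝ) : ℂ) = ∑ k, ∑ l, ψ (k - l) * ⟪f k, f l⟫_ℂ := by
    rw [Complex.ofReal_pow, ← RCLike.ofReal_eq_complex_ofReal, ← inner_self_eq_norm_sq_to_K,
      sum_inner]
    simp_rw [inner_sum, inner_smul_left, inner_smul_right, ← AddChar.map_neg_eq_conj, neg_neg,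
      sub_eq_add_neg, AddChar.map_add_eq_mul, mul_assoc]
  have orthogonality : ∑ ψ : AddChar G ℂ, ∑ k, ∑ l, ψ (k - l) * ⟪f k, f l⟫_ℂ =
      Fintype.card G * ∑ k, ⟪f k, f k⟫_ℂ := by
    rw [Finset.sum_comm, Finset.mul_sum]
    refine Finset.sum_congr rfl fun k _ => ?_
    rw [Finset.sum_comm]
    simp_rw [← Finset.sum_mul, AddChar.sum_apply_eq_ite, sub_eq_zero, ite_mul, zero_mul,
      Finset.sum_ite_eq, Finset.mem_univ, if_true]
  rw [← Complex.ofReal_inj, Complex.ofReal_sum, Finset.sum_congr rfl fun ψ _ => expand ψ,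
    orthogonality]
  simp [inner_self_eq_norm_sq_to_K]

theorem sum_norm_sq_sum_apply_add_le (f : G → E) (S : Finset ι) (A : ι → E →L[ℂ] E') (s : ι → G)
    {M : ℝ} (hM : ∀ ψ : AddChar G ℂ, ‖∑ i ∈ S, ψ (s i) • A i‖ ≤ M) :
    ∑ k, ‖∑ i ∈ S, A i (f (k + s i))‖ ^ 2 ≤ M ^ 2 * ∑ k, ‖f k‖ ^ 2 := by
  have transform (ψ : AddChar G ℂ) : ∑ k, ψ (-k) • ∑ i ∈ S, A i (f (k + s i)) =
      (∑ i ∈ S, ψ (s i) • A i) (∑ k, ψ (-k) • f k) := by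
    simp_rw [sum_apply, Finset.smul_sum, map_sum, map_smul, smul_apply]
    rw [Finset.sum_comm]
    refine Finset.sum_congr rfl fun i _ => ?_
    rw [← Equiv.sum_comp (Equiv.subRight (s i))]
    simp [smul_smul, AddChar.map_add_eq_mul, sub_eq_add_neg, mul_comm]
  have hcard : (0 : ℝ) < Fintype.card G := by exact_mod_cast Fintype.card_pos
  refine le_of_mul_le_mul_left ?_ hcard
  calc Fintype.card G * ∑ k, ‖∑ i ∈ S, A i (f (k + s i))‖ ^ 2
      = ∑ ψ : AddChar G ℂ, ‖(∑ i ∈ S, ψ (s i) • A i) (∑ k, ψ (-k) • f k)‖ ^ 2 := by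
        simp_rw [← sum_norm_sq_sum_addChar_neg_smul, transform]
    _ ≤ ∑ ψ : AddChar G ℂ, M ^ 2 * ‖∑ k, ψ (-k) • f k‖ ^ 2 := by
        gcongr with ψ
        rw [← mul_pow]
        gcongr
        exact le_of_opNorm_le _ (hM ψ) _
    _ = Fintype.card G * (M ^ 2 * ∑ k, ‖f k‖ ^ 2) := by
        rw [← Finset.mul_sum, sum_norm_sq_sum_addChar_neg_smul, mul_left_comm]

end Fourier

section Isometry

theorem le_of_forall_nat_mul_le_add {α : Type*} [Field α] [LinearOrder α] [IsStrictOrderedRing α]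
    [Archimedean α] {a b C : α} (h : ∀ n : ℕ, (n + 1) * a ≤ (n + 1) * b + C) : a ≤ b := by
  by_contra! hlt
  obtain ⟨n, hn⟩ := exists_lt_nsmul (sub_pos.2 hlt) C
  rw [nsmul_eq_mul] at hn
  linarith [h n]

theorem le_card_filter_val_add_lt_add (L d : ℕ) [NeZero L] :
    L ≤ (Finset.univ.filter fun k : ZMod L => k.val + d < L).card + d := by
  rw [← tsub_le_iff_right, ← Finset.card_range (L - d)]
  have hval {n : ℕ} (hn : n ∈ Finset.range (L - d)) : (n : ZMod L).val = n :=
    ZMod.val_cast_of_lt ((Finset.mem_range.1 hn).trans_le (Nat.sub_le _ _))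
  refine Finset.card_le_card_of_injOn (fun n => (n : ZMod L)) (fun n hn => ?_)
    fun m hm n hn hmn => ?_
  · simpa [hval hn] using Nat.add_lt_of_lt_sub (Finset.mem_range.1 hn)
  · rw [← hval hm, ← hval hn]
    exact congrArg ZMod.val hmn

theorem norm_pow_apply_of_isometry {𝕜 E : Type*} [Semiring 𝕜] [SeminormedAddCommGroup E]
    [Module 𝕜 E] {V : E →L[𝕜] E} (hV : Isometry V) (n : ℕ) (x : E) : ‖(V ^ n) x‖ = ‖x‖ := by
  induction n with
  | zero => rfl
  | succ n ih => rw [pow_succ', mul_apply_eq_comp, hV.norm_map_of_map_zero (map_zero V), ih]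

variable {K ι : Type*} [NormedAddCommGroup K] [InnerProductSpace ℂ K] {V : K →L[ℂ] K}

theorem mul_norm_sq_sum_mul_pow_apply_le (hV : Isometry V) {S : Finset ι} {A : ι → K →L[ℂ] K}
    (hA : ∀ i ∈ S, Commute (A i) V) {e : ι → ℕ} {d : ℕ} (hd : ∀ i ∈ S, e i ≤ d) {M : ℝ}
    (hM : ∀ z : ℂ, ‖z‖ = 1 → ‖∑ i ∈ S, z ^ e i • A i‖ ≤ M) (x : K) (L : ℕ) [NeZero L] :
    L * ‖(∑ i ∈ S, A i * V ^ e i) x‖ ^ 2 ≤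
      L * (M ^ 2 * ‖x‖ ^ 2) + d * ‖(∑ i ∈ S, A i * V ^ e i) x‖ ^ 2 := by
  set R := ∑ i ∈ S, A i * V ^ e i
  set unwrapped := Finset.univ.filter fun k : ZMod L => k.val + d < L
  have shift {k : ZMod L} (hk : k ∈ unwrapped) :
      ∑ i ∈ S, A i ((V ^ (k + e i).val) x) = (V ^ k.val) (R x) := by
    rw [Finset.mem_filter_univ] at hk
    rw [sum_apply, map_sum]
    refine Finset.sum_congr rfl fun i hi => ?_
    have hei := hd i hi
    have hval : (e i : ZMod L).val = e i := ZMod.val_cast_of_lt (by omega)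
    rw [ZMod.val_add_of_lt (by omega), hval, pow_add, ← mul_apply_eq_comp, ← mul_assoc,
      ((hA i hi).pow_right _).eq, mul_assoc, mul_apply_eq_comp]
  have character (ψ : AddChar (ZMod L) ℂ) : ‖∑ i ∈ S, ψ (e i : ZMod L) • A i‖ ≤ M := by
    simpa [← AddChar.map_nsmul_eq_pow] using hM (ψ 1) (ψ.norm_apply 1)
  have hcard : (L : ℝ) ≤ unwrapped.card + d := by exact_mod_cast le_card_filter_val_add_lt_add L d
  have average : unwrapped.card * ‖R x‖ ^ 2 ≤ L * (M ^ 2 * ‖x‖ ^ 2) := calc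
    unwrapped.card * ‖R x‖ ^ 2
      = ∑ k ∈ unwrapped, ‖∑ i ∈ S, A i ((V ^ (k + e i).val) x)‖ ^ 2 := by
        rw [Finset.sum_congr rfl fun k hk => by rw [shift hk, norm_pow_apply_of_isometry hV],
          Finset.sum_const, nsmul_eq_mul]
    _ ≤ ∑ k : ZMod L, ‖∑ i ∈ S, A i ((V ^ (k + e i).val) x)‖ ^ 2 :=
        Finset.sum_le_univ_sum_of_nonneg fun _ => by positivity
    _ ≤ M ^ 2 * ∑ k : ZMod L, ‖(V ^ k.val) x‖ ^ 2 :=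
        sum_norm_sq_sum_apply_add_le (fun k : ZMod L => (V ^ k.val) x) S A _ character
    _ = L * (M ^ 2 * ‖x‖ ^ 2) := by
        simp_rw [norm_pow_apply_of_isometry hV]
        simp [mul_left_comm]
  nlinarith [sq_nonneg ‖R x‖]

theorem norm_sum_mul_pow_le_of_isometry (hV : Isometry V) {S : Finset ι} {A : ι → K →L[ℂ] K}
    (hA : ∀ i ∈ S, Commute (A i) V) {e : ι → ℕ} {M : ℝ}
    (hM : ∀ z : ℂ, ‖z‖ = 1 → ‖∑ i ∈ S, z ^ e i • A i‖ ≤ M) :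
    ‖∑ i ∈ S, A i * V ^ e i‖ ≤ M := by
  have hM₀ : 0 ≤ M := (norm_nonneg _).trans (hM 1 norm_one)
  refine opNorm_le_bound _ hM₀ fun x => ?_
  rw [← sq_le_sq₀ (norm_nonneg _) (by positivity), mul_pow]
  refine le_of_forall_nat_mul_le_add (C := (S.sup e : ℕ) * ‖(∑ i ∈ S, A i * V ^ e i) x‖ ^ 2)
    fun n => ?_
  exact_mod_cast mul_norm_sq_sum_mul_pow_apply_le hV hA
    (d := S.sup e) (fun i hi => Finset.le_sup hi) hM x (n + 1)

theorem norm_sum_smul_pow_mul_pow_le_of_isometry {V₁ V₂ : K →L[ℂ] K} (hV₁ : Isometry V₁)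
    (hV₂ : Isometry V₂) (hV : Commute V₁ V₂) {S : Finset (ℕ × ℕ)} {c : ℕ × ℕ → ℂ} {M : ℝ}
    (hM : ∀ z w : ℂ, ‖z‖ = 1 → ‖w‖ = 1 → ‖∑ p ∈ S, c p * (z ^ p.1 * w ^ p.2)‖ ≤ M) :
    ‖∑ p ∈ S, c p • (V₁ ^ p.1 * V₂ ^ p.2)‖ ≤ M := by
  simp_rw [← smul_mul_assoc]
  refine norm_sum_mul_pow_le_of_isometry hV₂ (fun p _ => (hV.pow_left p.1).smul_left (c p))
    fun w hw => ?_
  simp_rw [smul_smul, ← smul_one_mul (_ * _) (V₁ ^ _)]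
  refine norm_sum_mul_pow_le_of_isometry hV₁ (fun p _ => (Commute.one_left V₁).smul_left _)
    fun z hz => ?_
  calc ‖∑ p ∈ S, z ^ p.1 • (w ^ p.2 * c p) • (1 : K →L[ℂ] K)‖
      = ‖(∑ p ∈ S, c p * (z ^ p.1 * w ^ p.2)) • (1 : K →L[ℂ] K)‖ := by
        simp only [smul_smul, Finset.sum_smul, mul_comm (c _), mul_assoc]
    _ ≤ ‖∑ p ∈ S, c p * (z ^ p.1 * w ^ p.2)‖ := by
        rw [norm_smul]
        exact mul_le_of_le_one_right (norm_nonneg _) norm_id_le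
    _ ≤ M := hM z w hz hw

end Isometry

section Contraction

theorem exists_norm_sq_add_norm_sq_eq {H K : Type*} [NormedAddCommGroup H]
    [InnerProductSpace ℂ H] [CompleteSpace H] [NormedAddCommGroup K] [InnerProductSpace ℂ K]
    [CompleteSpace K] {T : H →L[ℂ] K} (hT : ‖T‖ ≤ 1) :
    ∃ D : H →L[ℂ] H, ∀ x, ‖T x‖ ^ 2 + ‖D x‖ ^ 2 = ‖x‖ ^ 2 := by
  have hpos : 0 ≤ 1 - adjoint T ∘L T := by
    rw [sub_nonneg, ← CStarAlgebra.norm_le_one_iff_of_nonneg _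
      ((nonneg_iff_isPositive _).2 (isPositive_adjoint_comp_self T)), norm_adjoint_comp_self]
    exact mul_le_one₀ hT (norm_nonneg _) hT
  obtain ⟨D, hD⟩ := CStarAlgebra.nonneg_iff_eq_star_mul_self.1 hpos
  have hsum : adjoint T ∘L T + adjoint D ∘L D = 1 := by
    rw [← mul_def, ← star_eq_adjoint D, ← hD, add_sub_cancel]
  refine ⟨D, fun x => ?_⟩
  rw [apply_norm_sq_eq_inner_adjoint_left, apply_norm_sq_eq_inner_adjoint_left, ← map_add,
    ← inner_add_left, ← add_apply, hsum, one_apply_eq_self, inner_self_eq_norm_sq]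

end Contraction

section Reflection

variable {𝕜 X Y : Type*} [RCLike 𝕜] [AddCommGroup X] [Module 𝕜 X] [NormedAddCommGroup Y]
  [InnerProductSpace 𝕜 Y] [CompleteSpace Y]

theorem exists_involutive_linearIsometryEquiv_apply_eq (A B : X →ₗ[𝕜] Y)
    (hnorm : ∀ x, ‖A x‖ = ‖B x‖) (hsymm : ∀ x y, ⟪A x, B y⟫_𝕜 = ⟪B x, A y⟫_𝕜) :
    ∃ G : Y ≃ₗᵢ[𝕜] Y, Function.Involutive G ∧ ∀ x, G (A x) = B x := by
  have hinner (x y : X) : ⟪A x, A y⟫_𝕜 = ⟪B x, B y⟫_𝕜 := by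
    simp only [inner_eq_sum_norm_sq_div_four, ← map_smul, ← map_add, ← map_sub, hnorm]
  let N := LinearMap.range (A - B)
  refine ⟨Nᗮ.reflection, Nᗮ.reflection_involutive, fun x => ?_⟩
  have hsub : A x - B x ∈ Nᗮᗮ := N.le_orthogonal_orthogonal ⟨x, rfl⟩
  have hadd : A x + B x ∈ Nᗮ := by
    rw [Submodule.mem_orthogonal]
    rintro _ ⟨y, rfl⟩
    simp [inner_sub_left, inner_add_right, hinner, hsymm]
  have htwo : (2 : 𝕜) • Nᗮ.reflection (A x) = (2 : 𝕜) • B x := calc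
    (2 : 𝕜) • Nᗮ.reflection (A x)
      = Nᗮ.reflection (A x - B x) + Nᗮ.reflection (A x + B x) := by
        rw [← map_add, ← map_smul]
        congr 1
        module
    _ = -(A x - B x) + (A x + B x) := by
        rw [Submodule.reflection_mem_subspace_orthogonalComplement_eq_neg hsub,
          Submodule.reflection_mem_subspace_eq_self hadd]
    _ = (2 : 𝕜) • B x := by module
  exact smul_right_injective _ two_ne_zero htwo

end Reflection

noncomputable section SquareSummable

variable {𝕜 ι X F : Type*} [NormedField 𝕜] {E E' : ι → Type*}
  [∀ i, NormedAddCommGroup (E i)] [∀ i, NormedAddCommGroup (E' i)]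

theorem hasSum_norm_sq_lp_two (f : lp E 2) : HasSum (fun i => ‖f i‖ ^ 2) (‖f‖ ^ 2) := by
  simpa using lp.hasSum_norm (p := 2) (by simp) f

variable [∀ i, NormedSpace 𝕜 (E i)] [∀ i, NormedSpace 𝕜 (E' i)] [NormedAddCommGroup X]
  [NormedSpace 𝕜 X] [NormedAddCommGroup F]

/-- The isometry into the `ℓ²` direct sum with coordinates `Φ x i`, given that the squared norms
of the coordinates of `x` sum to `‖x‖ ^ 2`. -/
def isometryToLpTwo (Φ : X →ₗ[𝕜] ∀ i, E i)
    (hΦ : ∀ x, HasSum (fun i => ‖Φ x i‖ ^ 2) (‖x‖ ^ 2)) : X →ₗᵢ[𝕜] lp E 2 where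
  toFun x := ⟨Φ x, memℓp_gen (by simpa using (hΦ x).summable)⟩
  map_add' x y := by ext i; exact congrFun (map_add Φ x y) i
  map_smul' c x := by ext i; exact congrFun (map_smul Φ c x) i
  norm_map' x := by
    rw [← sq_eq_sq₀ (norm_nonneg _) (norm_nonneg _)]
    exact (hasSum_norm_sq_lp_two _).unique (hΦ x)

/-- The `ℓ²` direct sum of a family of isometries. -/
def lpTwoMap (G : ∀ i, E i →ₗᵢ[𝕜] E' i) : lp E 2 →ₗᵢ[𝕜] lp E' 2 :=
  isometryToLpTwo
    { toFun f i := G i (f i)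
      map_add' f g := by ext i; simp
      map_smul' c f := by ext i; simp }
    fun f => by simpa using hasSum_norm_sq_lp_two f

/-- The space `ℓ²(ℕ, F ⊕ F)` of square-summable sequences of pairs. -/
abbrev PairSeq (F : Type*) [NormedAddCommGroup F] := lp (fun _ : ℕ => WithLp 2 (F × F)) 2

/-- Reading a sequence of pairs as one sequence of entries, put `a` in front of it:
`(p₀, q₀), (p₁, q₁), …` becomes `(a, p₀), (q₀, p₁), …`. -/
def pairShiftSeq (a : F) (f : ℕ → WithLp 2 (F × F)) : ℕ → WithLp 2 (F × F)
  | 0 => WithLp.toLp 2 (a, (f 0).fst)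
  | n + 1 => WithLp.toLp 2 ((f n).snd, (f (n + 1)).fst)

theorem hasSum_norm_sq_pairShiftSeq (a : F) (f : PairSeq F) :
    HasSum (fun n => ‖pairShiftSeq a f n‖ ^ 2) (‖a‖ ^ 2 + ‖f‖ ^ 2) := by
  have hf := hasSum_norm_sq_lp_two f
  simp_rw [WithLp.prod_norm_sq_eq_of_L2] at hf ⊢
  have hfst : Summable fun n => ‖(f n).fst‖ ^ 2 := hf.summable.of_nonneg_of_le
    (fun _ => by positivity) fun _ => le_add_of_nonneg_right (by positivity)
  have hsnd : Summable fun n => ‖(f n).snd‖ ^ 2 := hf.summable.of_nonneg_of_le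
    (fun _ => by positivity) fun _ => le_add_of_nonneg_left (by positivity)
  have hfirst : HasSum (fun n => ‖(pairShiftSeq a f n).fst‖ ^ 2)
      (‖a‖ ^ 2 + ∑' n, ‖(f n).snd‖ ^ 2) :=
    HasSum.zero_add (f := fun n => ‖(pairShiftSeq a f n).fst‖ ^ 2) hsnd.hasSum
  have hsecond : HasSum (fun n => ‖(pairShiftSeq a f n).snd‖ ^ 2) (∑' n, ‖(f n).fst‖ ^ 2) :=
    hfst.hasSum.congr_fun fun n => by cases n <;> rfl
  convert hfirst.add hsecond using 1
  rw [hf.unique (hfst.hasSum.add hsnd.hasSum)]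
  ring

variable [NormedSpace 𝕜 F]

variable (𝕜 F) in
/-- `pairShiftSeq` as an isometry `F ⊕ ℓ²(ℕ, F ⊕ F) → ℓ²(ℕ, F ⊕ F)`. -/
def pairShift : WithLp 2 (F × PairSeq F) →ₗᵢ[𝕜] PairSeq F :=
  isometryToLpTwo
    { toFun x := pairShiftSeq x.fst x.snd
      map_add' x y := by
        ext n
        cases n <;> simp [pairShiftSeq, ← WithLp.toLp_add]
      map_smul' c x := by
        ext n
        cases n <;> simp [pairShiftSeq, ← WithLp.toLp_smul] }
    fun x => by
      rw [WithLp.prod_norm_sq_eq_of_L2]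
      exact hasSum_norm_sq_pairShiftSeq _ _

theorem pairShift_pairShift_zero (a b : F) (f : PairSeq F) :
    pairShift 𝕜 F (WithLp.toLp 2 (a, pairShift 𝕜 F (WithLp.toLp 2 (b, f)))) 0 =
      WithLp.toLp 2 (a, b) :=
  rfl

theorem pairShift_pairShift_succ (a b : F) (f : PairSeq F) (n : ℕ) :
    pairShift 𝕜 F (WithLp.toLp 2 (a, pairShift 𝕜 F (WithLp.toLp 2 (b, f)))) (n + 1) = f n := by
  cases n <;> rfl

end SquareSummable

noncomputable section Dilation

variable {𝕜 H F : Type*} [NormedAddCommGroup H] [NormedAddCommGroup F]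

/-- The space `H ⊕ ℓ²(ℕ, F ⊕ F)` of the isometric dilations, where `F` is the codomain of the
defect operators. The sequence consists of pairs so that the product of two dilations shifts it by
exactly one place. -/
abbrev DilationSpace (H F : Type*) [NormedAddCommGroup H] [NormedAddCommGroup F] :=
  WithLp 2 (H × PairSeq F)

theorem dilationSpace_ext {k l : DilationSpace H F} (hfst : k.fst = l.fst)
    (hsnd : ∀ n, k.snd n = l.snd n) : k = l :=
  WithLp.ofLp_injective 2 (Prod.ext hfst (lp.ext (funext hsnd)))

section NormedSpace

variable [NormedField 𝕜] [NormedSpace 𝕜 H] [NormedSpace 𝕜 F]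

/-- The isometry fixing `H` and applying `G` to every pair of the sequence. -/
def blockDiagonal (G : WithLp 2 (F × F) →ₗᵢ[𝕜] WithLp 2 (F × F)) :
    DilationSpace H F →ₗᵢ[𝕜] DilationSpace H F :=
  LinearIsometry.id.withLpProdMap 2 (lpTwoMap fun _ => G)

/-- Schäffer's isometric dilation `(h, f) ↦ (T h, (D h, f))` of a contraction `T`, where `D` is a
defect operator of `T`, i.e. `T* T + D* D = 1`, here expressed through norms. -/
def schafferIsometry (T : H →L[𝕜] H) (D : H →L[𝕜] F)
    (hD : ∀ x, ‖T x‖ ^ 2 + ‖D x‖ ^ 2 = ‖x‖ ^ 2) :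
    DilationSpace H F →ₗᵢ[𝕜] DilationSpace H F where
  toFun k := WithLp.toLp 2 (T k.fst, pairShift 𝕜 F (WithLp.toLp 2 (D k.fst, k.snd)))
  map_add' k l := by
    rw [WithLp.add_fst, WithLp.add_snd, map_add, map_add, ← Prod.mk_add_mk, WithLp.toLp_add,
      map_add, ← Prod.mk_add_mk, WithLp.toLp_add]
  map_smul' c k := by
    rw [WithLp.smul_fst, WithLp.smul_snd, map_smul, map_smul, ← Prod.smul_mk, WithLp.toLp_smul,
      map_smul, ← Prod.smul_mk, WithLp.toLp_smul, RingHom.id_apply]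
  norm_map' k := by
    change ‖WithLp.toLp 2 (T k.fst, pairShift 𝕜 F (WithLp.toLp 2 (D k.fst, k.snd)))‖ = ‖k‖
    rw [← sq_eq_sq₀ (norm_nonneg _) (norm_nonneg _)]
    simp [WithLp.prod_norm_sq_eq_of_L2, ← hD k.fst, add_assoc]

end NormedSpace

section InnerProductSpace

variable [RCLike 𝕜] [InnerProductSpace 𝕜 H] [InnerProductSpace 𝕜 F] [CompleteSpace F]
  {T₁ T₂ : H →L[𝕜] H} {D₁ D₂ : H →L[𝕜] F}

theorem exists_involutive_linearIsometryEquiv_defect (hT : Commute T₁ T₂)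
    (hD₁ : ∀ x, ‖T₁ x‖ ^ 2 + ‖D₁ x‖ ^ 2 = ‖x‖ ^ 2)
    (hD₂ : ∀ x, ‖T₂ x‖ ^ 2 + ‖D₂ x‖ ^ 2 = ‖x‖ ^ 2) (horth : ∀ x y, ⟪D₁ x, D₂ y⟫_𝕜 = 0) :
    ∃ G : WithLp 2 (F × F) ≃ₗᵢ[𝕜] WithLp 2 (F × F), Function.Involutive G ∧
      ∀ x, G (WithLp.toLp 2 (D₁ (T₂ x), D₂ x)) = WithLp.toLp 2 (D₂ (T₁ x), D₁ x) := by
  let pair (A B : H →L[𝕜] F) : H →ₗ[𝕜] WithLp 2 (F × F) :=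
    (WithLp.linearEquiv 2 𝕜 (F × F)).symm.toLinearMap ∘ₗ (A.prod B).toLinearMap
  have norm_sq_pair (A B : H →L[𝕜] F) (x : H) : ‖pair A B x‖ ^ 2 = ‖A x‖ ^ 2 + ‖B x‖ ^ 2 :=
    WithLp.prod_norm_sq_eq_of_L2 _
  refine exists_involutive_linearIsometryEquiv_apply_eq (pair (D₁ ∘L T₂) D₂) (pair (D₂ ∘L T₁) D₁)
    (fun x => ?_) fun x y => ?_
  · have hcomm : T₁ (T₂ x) = T₂ (T₁ x) := congr($hT x)
    have h₁₂ := hD₁ (T₂ x)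
    rw [hcomm] at h₁₂
    rw [← sq_eq_sq₀ (norm_nonneg _) (norm_nonneg _), norm_sq_pair, norm_sq_pair, comp_apply,
      comp_apply]
    linarith [hD₂ (T₁ x), hD₁ x, hD₂ x]
  · have horth' (x y : H) : ⟪D₂ x, D₁ y⟫_𝕜 = 0 := inner_eq_zero_symm.1 (horth y x)
    simp [pair, WithLp.prod_inner_apply, horth, horth']

theorem exists_commuting_isometries_of_orthogonal_defect (hT : Commute T₁ T₂)
    (hD₁ : ∀ x, ‖T₁ x‖ ^ 2 + ‖D₁ x‖ ^ 2 = ‖x‖ ^ 2)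
    (hD₂ : ∀ x, ‖T₂ x‖ ^ 2 + ‖D₂ x‖ ^ 2 = ‖x‖ ^ 2) (horth : ∀ x y, ⟪D₁ x, D₂ y⟫_𝕜 = 0) :
    ∃ V₁ V₂ : DilationSpace H F →ₗᵢ[𝕜] DilationSpace H F, Commute V₁ V₂ ∧
      (∀ k, (V₁ k).fst = T₁ k.fst) ∧ ∀ k, (V₂ k).fst = T₂ k.fst := by
  obtain ⟨G, hG, hGD⟩ := exists_involutive_linearIsometryEquiv_defect hT hD₁ hD₂ horth
  let W₁ := schafferIsometry T₁ D₁ hD₁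
  let W₂ := schafferIsometry T₂ D₂ hD₂
  let Γ : DilationSpace H F →ₗᵢ[𝕜] DilationSpace H F := blockDiagonal G.toLinearIsometry
  have hΓ : Γ * Γ = 1 := LinearIsometry.ext fun k => dilationSpace_ext rfl fun n => hG (k.snd n)
  have hswap : Γ * W₁ * W₂ = W₂ * W₁ * Γ := by
    refine LinearIsometry.ext fun k => dilationSpace_ext congr($hT k.fst) fun n => ?_
    cases n with
    | zero =>
      exact (congrArg G (pairShift_pairShift_zero ..)).trans
        ((hGD k.fst).trans (pairShift_pairShift_zero ..).symm)
    | succ n =>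
      exact (congrArg G (pairShift_pairShift_succ ..)).trans
        (pairShift_pairShift_succ (D₂ (T₁ k.fst)) (D₁ k.fst) (Γ k).snd n).symm
  refine ⟨Γ * W₁, W₂ * Γ, ?_, fun _ => rfl, fun _ => rfl⟩
  calc Γ * W₁ * (W₂ * Γ) = Γ * W₁ * W₂ * Γ := (mul_assoc _ _ _).symm
    _ = W₂ * W₁ := by rw [hswap, mul_assoc, hΓ, mul_one]
    _ = W₂ * Γ * (Γ * W₁) := by rw [mul_assoc, ← mul_assoc Γ, hΓ, one_mul]

end InnerProductSpace

/-- Andô's dilation theorem. The first-component equations say that `Vᵢ` dilates `Tᵢ` and leaves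
the orthogonal complement of `H` invariant, so they pass to products. -/
theorem ando_dilation {H : Type*} [NormedAddCommGroup H] [InnerProductSpace ℂ H] [CompleteSpace H]
    {T₁ T₂ : H →L[ℂ] H} (hT₁ : ‖T₁‖ ≤ 1) (hT₂ : ‖T₂‖ ≤ 1) (hT : Commute T₁ T₂) :
    ∃ V₁ V₂ : DilationSpace H (WithLp 2 (H × H)) →ₗᵢ[ℂ] DilationSpace H (WithLp 2 (H × H)),
      Commute V₁ V₂ ∧ (∀ k, (V₁ k).fst = T₁ k.fst) ∧ ∀ k, (V₂ k).fst = T₂ k.fst := by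
  obtain ⟨D₁, hD₁⟩ := exists_norm_sq_add_norm_sq_eq hT₁
  obtain ⟨D₂, hD₂⟩ := exists_norm_sq_add_norm_sq_eq hT₂
  let toPair := (WithLp.prodContinuousLinearEquiv 2 ℂ H H).symm.toContinuousLinearMap
  refine exists_commuting_isometries_of_orthogonal_defect (D₁ := toPair ∘L D₁.prod 0)
    (D₂ := toPair ∘L ContinuousLinearMap.prod 0 D₂) hT (fun x => ?_) (fun x => ?_) fun x y => ?_
  · simpa [toPair, WithLp.prod_norm_sq_eq_of_L2] using hD₁ x
  · simpa [toPair, WithLp.prod_norm_sq_eq_of_L2] using hD₂ x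
  · simp [toPair, WithLp.prod_inner_apply]

end Dilation

section VonNeumann

variable {𝕜 K E : Type*} [NontriviallyNormedField 𝕜] [NormedAddCommGroup K] [NormedSpace 𝕜 K]
  [NormedAddCommGroup E] [NormedSpace 𝕜 E]

variable {H : Type*} [NormedAddCommGroup H] [InnerProductSpace ℂ H]

theorem comp_pow_eq_pow_comp {P : K →L[𝕜] E} {V : K →L[𝕜] K} {T : E →L[𝕜] E}
    (h : P ∘L V = T ∘L P) (n : ℕ) : P ∘L V ^ n = (T ^ n) ∘L P := by
  induction n with
  | zero => rfl
  | succ n ih => rw [pow_succ, pow_succ, mul_def, mul_def, ← comp_assoc, ih, comp_assoc, h]; rfl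

theorem comp_sum_smul_pow_mul_pow {P : K →L[𝕜] E} {V₁ V₂ : K →L[𝕜] K} {T₁ T₂ : E →L[𝕜] E}
    (h₁ : P ∘L V₁ = T₁ ∘L P) (h₂ : P ∘L V₂ = T₂ ∘L P) (S : Finset (ℕ × ℕ)) (c : ℕ × ℕ → 𝕜) :
    P ∘L (∑ p ∈ S, c p • (V₁ ^ p.1 * V₂ ^ p.2)) =
      (∑ p ∈ S, c p • (T₁ ^ p.1 * T₂ ^ p.2)) ∘L P := by
  have h (p : ℕ × ℕ) : P ∘L (V₁ ^ p.1 * V₂ ^ p.2) = (T₁ ^ p.1 * T₂ ^ p.2) ∘L P := by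
    rw [mul_def, mul_def, ← comp_assoc, comp_pow_eq_pow_comp h₁, comp_assoc,
      comp_pow_eq_pow_comp h₂, comp_assoc]
  simp_rw [comp_finsetSum, finsetSum_comp, comp_smul, smul_comp, h]

theorem isCompact_setOf_norm_fst_le_norm_snd_le {X Y : Type*} [SeminormedAddCommGroup X]
    [SeminormedAddCommGroup Y] [ProperSpace X] [ProperSpace Y] (r : ℝ) :
    IsCompact {p : X × Y | ‖p.1‖ ≤ r ∧ ‖p.2‖ ≤ r} := by
  simp_rw [← norm_prod_le_iff, ← mem_closedBall_zero_iff]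
  exact isCompact_closedBall 0 r

theorem two_variable_von_neumann_general [CompleteSpace H] {T₁ T₂ : H →L[ℂ] H} (hT₁ : ‖T₁‖ ≤ 1)
    (hT₂ : ‖T₂‖ ≤ 1) (hT : Commute T₁ T₂) {S : Finset (ℕ × ℕ)} {c : ℕ × ℕ → ℂ} {M : ℝ}
    (hM : ∀ z w : ℂ, ‖z‖ = 1 → ‖w‖ = 1 → ‖∑ p ∈ S, c p * (z ^ p.1 * w ^ p.2)‖ ≤ M) :
    ‖∑ p ∈ S, c p • (T₁ ^ p.1 * T₂ ^ p.2)‖ ≤ M := by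
  obtain ⟨V₁, V₂, hV, hfst₁, hfst₂⟩ := ando_dilation hT₁ hT₂ hT
  let W₁ := V₁.toContinuousLinearMap
  let W₂ := V₂.toContinuousLinearMap
  have hW : Commute W₁ W₂ := ContinuousLinearMap.ext fun k => congr($hV k)
  have bound := norm_sum_smul_pow_mul_pow_le_of_isometry V₁.isometry V₂.isometry hW hM
  have hfst : WithLp.fstL 2 ℂ H _ ∘L ∑ p ∈ S, c p • (W₁ ^ p.1 * W₂ ^ p.2) =
      (∑ p ∈ S, c p • (T₁ ^ p.1 * T₂ ^ p.2)) ∘L WithLp.fstL 2 ℂ H _ :=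
    comp_sum_smul_pow_mul_pow (ContinuousLinearMap.ext hfst₁) (ContinuousLinearMap.ext hfst₂) S c
  refine opNorm_le_bound _ ((norm_nonneg _).trans bound) fun x => ?_
  let k : DilationSpace H (WithLp 2 (H × H)) := WithLp.toLp 2 (x, 0)
  calc ‖(∑ p ∈ S, c p • (T₁ ^ p.1 * T₂ ^ p.2)) x‖
      = ‖((∑ p ∈ S, c p • (W₁ ^ p.1 * W₂ ^ p.2)) k).fst‖ := congr(‖$hfst.symm k‖)
    _ ≤ ‖(∑ p ∈ S, c p • (W₁ ^ p.1 * W₂ ^ p.2)) k‖ := WithLp.norm_fst_le ..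
    _ ≤ M * ‖k‖ := le_of_opNorm_le _ bound k
    _ = M * ‖x‖ := by rw [WithLp.norm_toLp_fst]

end VonNeumann

/-- **Two-variable von Neumann inequality.** For commuting contractions `T₁, T₂` on a
complex Hilbert space and any polynomial `p(z,w) = Σ c(i,j) zⁱ wʲ` (finitely supported
coefficients), `‖p(T₁,T₂)‖` is bounded by the sup of `|p|` on the closed bidisk. -/
theorem two_variable_von_neumann {H : Type*} [NormedAddCommGroup H] [InnerProductSpace ℂ H]
    [CompleteSpace H] (T₁ T₂ : H →L[ℂ] H)
    (hT₁ : ‖T₁‖ ≤ 1) (hT₂ : ‖T₂‖ ≤ 1) (hcomm : T₁ * T₂ = T₂ * T₁)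
    (c : (ℕ × ℕ) →₀ ℂ) :
    ‖∑ p ∈ c.support, c p • (T₁ ^ p.1 * T₂ ^ p.2)‖ ≤
      sSup ((fun zw : ℂ × ℂ => ‖∑ p ∈ c.support, c p * (zw.1 ^ p.1 * zw.2 ^ p.2)‖) ''
        {zw : ℂ × ℂ | ‖zw.1‖ ≤ 1 ∧ ‖zw.2‖ ≤ 1}) :=
  two_variable_von_neumann_general hT₁ hT₂ hcomm fun z w hz hw =>
    le_csSup ((isCompact_setOf_norm_fst_le_norm_snd_le 1).bddAbove_image (by fun_prop))
      ⟨(z, w), ⟨hz.le, hw.le⟩, rfl⟩
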